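/- arXiv:1405.3194 — 3 statements merged into one kernel-verified Lean document; each statement's English description precedes it below -/
import Mathlib

section
/- For all positive integers k and p, the extended alternating quadratic sine sum satisfies ∑_{n=1}^{4kp} (-1)^n * sin(π n² / (4k)) = p * (-1)^k * √(2k). -/
open Finset Real

lemma aux_split (m : ℕ) (hm : 0 < m) (t : ℝ) (ht : 0 < t) :
    jacobiTheta (1 / (2 * m : ℕ) + Complex.I * t / (2 * m : ℕ) ^ 2) =
      ∑ r : Fin (2 * m), Complex.exp (π * Complex.I * (r : ℕ) ^ 2 / (2 * m : ℕ)) *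
        (HurwitzZeta.evenKernel (((r : ℕ) / (2 * m : ℕ) : ℝ) : UnitAddCircle) t : ℂ) := by
  have : NeZero (2 * m) := ⟨by omega⟩
  have hmC : (m : ℂ) ≠ 0 := by exact_mod_cast hm.ne'
  have him : 0 < (1 / (2 * m : ℕ) + Complex.I * t / (2 * m : ℕ) ^ 2 : ℂ).im := by
    have e : (1 / (2 * m : ℕ) + Complex.I * t / (2 * m : ℕ) ^ 2 : ℂ) =
      ((1 / (2 * m) : ℝ) : ℂ) + ((t / (2 * m) ^ 2 : ℝ) : ℂ) * Complex.I := by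
      push_cast; ring
    rw [e]
    simp only [Complex.add_im, Complex.ofReal_im, Complex.mul_im, Complex.ofReal_re, Complex.I_im,
      Complex.I_re]
    have : (0 : ℝ) < m := by exact_mod_cast hm
    have : 0 < t / (2 * m : ℝ) ^ 2 := by positivity
    linarith
  set τ : ℂ := 1 / (2 * m : ℕ) + Complex.I * t / (2 * m : ℕ) ^ 2 with hτ
  have h1 := hasSum_jacobiTheta₂_term 0 him
  rw [← jacobiTheta_eq_jacobiTheta₂] at h1
  have h2 := ((Equiv.prodComm _ _).trans (Int.divModEquiv (2 * m)).symm).hasSum_iff.mpr h1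
  have h3 := h2.prod_fiberwise
    (g := fun r : Fin (2 * m) => Complex.exp (π * Complex.I * (r : ℕ) ^ 2 / (2 * m : ℕ)) *
        (HurwitzZeta.evenKernel (((r : ℕ) / (2 * m : ℕ) : ℝ) : UnitAddCircle) t : ℂ)) ?_
  · exact h3.unique (hasSum_fintype _)
  · intro r
    have h4 := (Complex.hasSum_ofReal.mpr (HurwitzZeta.hasSum_int_evenKernel
      ((r : ℕ) / (2 * m : ℕ) : ℝ) ht)).mul_left
        (Complex.exp (π * Complex.I * (r : ℕ) ^ 2 / (2 * m : ℕ)))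
    refine h4.congr_fun fun q => ?_
    simp only [Function.comp, Equiv.trans_apply, Equiv.prodComm_apply, Prod.swap,
      Int.divModEquiv_symm_apply, jacobiTheta₂_term]
    rw [Complex.ofReal_exp, ← Complex.exp_add, Complex.exp_eq_exp_iff_exists_int]
    refine ⟨(r : ℕ) * q + m * q ^ 2, ?_⟩
    rw [hτ]
    push_cast
    field_simp
    ring_nf
    simp only [Complex.I_sq]
    ring

lemma aux_period (m : ℕ) (τ : ℂ) : jacobiTheta ((2 * m : ℕ) + τ) = jacobiTheta τ := by
  induction m with
  | zero => simp
  | succ n ih =>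
    rw [← ih, ← jacobiTheta_two_add ((2 * n : ℕ) + τ)]
    congr 1
    push_cast
    ring

lemma aux_S (τ : ℂ) (h : 0 < τ.im) :
    jacobiTheta (-1 / τ) = (-Complex.I * τ) ^ (1 / 2 : ℂ) * jacobiTheta τ := by
  have := jacobiTheta_S_smul ⟨τ, h⟩
  rw [UpperHalfPlane.modular_S_smul] at this
  convert this using 2
  rw [UpperHalfPlane.coe_mk, inv_neg, neg_div, one_div]

lemma aux_fe (m : ℕ) (hm : 0 < m) (x : ℝ) (hx : 0 < x) :
    (-Complex.I * (1 / (2 * m : ℕ) + Complex.I * (1 / x : ℝ) / (2 * m : ℕ) ^ 2)) ^ (1 / 2 : ℂ) *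
      jacobiTheta (1 / (2 * m : ℕ) + Complex.I * (1 / x : ℝ) / (2 * m : ℕ) ^ 2) =
    (-Complex.I * (Complex.I * x - 1 / (2 * m : ℕ))) ^ (1 / 2 : ℂ) *
      jacobiTheta (Complex.I * x - 1 / (2 * m : ℕ)) := by
  have hmC : (m : ℂ) ≠ 0 := by exact_mod_cast hm.ne'
  have hxC : (x : ℂ) ≠ 0 := by exact_mod_cast hx.ne'
  have hmR : (0 : ℝ) < m := by exact_mod_cast hm
  have e1 : (1 / (2 * m : ℕ) + Complex.I * (1 / x : ℝ) / (2 * m : ℕ) ^ 2 : ℂ) =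
      ((1 / (2 * m) : ℝ) : ℂ) + ((1 / x / (2 * m) ^ 2 : ℝ) : ℂ) * Complex.I := by
    push_cast; ring
  have e2 : (Complex.I * x - 1 / (2 * m : ℕ) : ℂ) =
      ((-1 / (2 * m) : ℝ) : ℂ) + (x : ℂ) * Complex.I := by
    push_cast; ring
  have i1 : 0 < (1 / (2 * m : ℕ) + Complex.I * (1 / x : ℝ) / (2 * m : ℕ) ^ 2 : ℂ).im := by
    rw [e1]
    simp only [Complex.add_im, Complex.ofReal_im, Complex.mul_im, Complex.ofReal_re, Complex.I_im,
      Complex.I_re]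
    have : 0 < 1 / x / (2 * m : ℝ) ^ 2 := by positivity
    linarith
  have i2 : 0 < (Complex.I * x - 1 / (2 * m : ℕ) : ℂ).im := by
    rw [e2]
    simp only [Complex.add_im, Complex.ofReal_im, Complex.mul_im, Complex.ofReal_re, Complex.I_im,
      Complex.I_re]
    linarith
  rw [← aux_S _ i1, ← aux_S _ i2, ← aux_period m]
  congr 1
  have n1 : (1 / (2 * m : ℕ) + Complex.I * (1 / x : ℝ) / (2 * m : ℕ) ^ 2 : ℂ) ≠ 0 := by
    intro h; rw [h] at i1; simp at i1
  have n2 : (Complex.I * x - 1 / (2 * m : ℕ) : ℂ) ≠ 0 := by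
    intro h; rw [h] at i2; simp at i2
  have key : (1 / (2 * m : ℕ) + Complex.I * (1 / x : ℝ) / (2 * m : ℕ) ^ 2 : ℂ) =
      (Complex.I * x - 1 / (2 * m : ℕ)) / (Complex.I * (2 * m : ℕ) * x) := by
    push_cast
    field_simp
    ring_nf
    simp only [Complex.I_sq]
    ring
  rw [key]
  have hI := Complex.I_ne_zero
  rw [div_div_eq_mul_div, eq_div_iff n2, add_mul, div_mul_cancel₀ _ n2]
  push_cast
  field_simp
  ring

lemma aux_cos (a : UnitAddCircle) :
    Filter.Tendsto (fun x : ℝ => (HurwitzZeta.cosKernel a x : ℂ)) Filter.atTop (nhds 1) := by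
  obtain ⟨p, hp, h⟩ := HurwitzZeta.isBigO_atTop_cosKernel_sub a
  have h0 : Filter.Tendsto (fun x : ℝ => Real.exp (-p * x)) Filter.atTop (nhds 0) :=
    Real.tendsto_exp_atBot.comp (Filter.tendsto_id.const_mul_atTop_of_neg (by linarith))
  have h1 := (h.trans_tendsto h0).add_const 1
  simp only [sub_add_cancel, zero_add] at h1
  exact_mod_cast (Complex.continuous_ofReal.tendsto 1).comp h1

lemma aux_theta (c : ℝ) :
    Filter.Tendsto (fun x : ℝ => jacobiTheta (Complex.I * x - c)) Filter.atTop (nhds 1) := by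
  have h0 : Filter.Tendsto (fun x : ℝ => Real.exp (-π * x)) Filter.atTop (nhds 0) :=
    Real.tendsto_exp_atBot.comp
      (Filter.tendsto_id.const_mul_atTop_of_neg (by linarith [Real.pi_pos]))
  have hk : Filter.Tendsto (fun x : ℝ => Complex.I * x - c) Filter.atTop
      (Filter.comap Complex.im Filter.atTop) := by
    rw [Filter.tendsto_comap_iff]
    convert Filter.tendsto_id (α := ℝ) using 1
    ext x
    simp
  have h := isBigO_at_im_infty_jacobiTheta_sub_one.comp_tendsto hk
  have h1 := (h.trans_tendsto (by
    convert h0 using 2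
    simp)).add_const 1
  simpa [Function.comp_def] using h1

lemma aux_cpow {f : ℝ → ℂ} {a : ℂ} (h : Filter.Tendsto f Filter.atTop (nhds a))
    (ha : a ∈ Complex.slitPlane) :
    Filter.Tendsto (fun x => f x ^ (1 / 2 : ℂ)) Filter.atTop (nhds (a ^ (1 / 2 : ℂ))) :=
  h.cpow tendsto_const_nhds ha

lemma aux_gauss (m : ℕ) (hm : 0 < m) :
    ∑ r : Fin (2 * m), Complex.exp (π * Complex.I * (r : ℕ) ^ 2 / (2 * m : ℕ)) =
      (1 + Complex.I) * (Real.sqrt m : ℂ) := by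
  have hmC : (m : ℂ) ≠ 0 := by exact_mod_cast hm.ne'
  have hmR : (0 : ℝ) < m := by exact_mod_cast hm
  have hinv : Filter.Tendsto (fun x : ℝ => ((1 / x : ℝ) : ℂ)) Filter.atTop (nhds 0) := by
    have := (Complex.continuous_ofReal.tendsto 0).comp
      (tendsto_inv_atTop_zero (𝕜 := ℝ))
    simpa [Function.comp_def] using this
  have hL1 : Filter.Tendsto (fun x : ℝ => (-Complex.I * (1 / (2 * m : ℕ) +
      Complex.I * (1 / x : ℝ) / (2 * m : ℕ) ^ 2)) ^ (1 / 2 : ℂ)) Filter.atTop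
      (nhds ((-Complex.I * (1 / (2 * m : ℕ))) ^ (1 / 2 : ℂ))) := by
    refine aux_cpow ?_ ?_
    · have := (((hinv.const_mul Complex.I).div_const ((2 * m : ℕ) ^ 2)).const_add
        (1 / (2 * m : ℕ) : ℂ)).const_mul (-Complex.I)
      simpa using this
    · right
      have : (-Complex.I * (1 / (2 * m : ℕ)) : ℂ) = ((1 / (2 * m) : ℝ) : ℂ) * (-Complex.I) := by
        push_cast; ring
      rw [this]
      simp [hm.ne']
  have hL2 : Filter.Tendsto (fun x : ℝ => ∑ r : Fin (2 * m),
      Complex.exp (π * Complex.I * (r : ℕ) ^ 2 / (2 * m : ℕ)) *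
        (HurwitzZeta.cosKernel (((r : ℕ) / (2 * m : ℕ) : ℝ) : UnitAddCircle) x : ℂ)) Filter.atTop
      (nhds (∑ r : Fin (2 * m),
        Complex.exp (π * Complex.I * (r : ℕ) ^ 2 / (2 * m : ℕ)) * 1)) :=
    tendsto_finsetSum _ fun r _ => (aux_cos _).const_mul _
  have hR1 : Filter.Tendsto (fun x : ℝ => (1 + Complex.I / (2 * m : ℕ) * (1 / x : ℝ)) ^ (1 / 2 : ℂ))
      Filter.atTop (nhds 1) := by
    have h := (hinv.const_mul (Complex.I / (2 * m : ℕ))).const_add 1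
    rw [mul_zero, add_zero] at h
    have := aux_cpow h (Or.inl (by simp))
    simpa using this
  have hR2 := aux_theta (1 / (2 * m : ℕ))
  have hEq : ∀ᶠ x : ℝ in Filter.atTop,
      (1 + Complex.I / (2 * m : ℕ) * (1 / x : ℝ)) ^ (1 / 2 : ℂ) *
        jacobiTheta (Complex.I * x - (1 / (2 * m : ℕ) : ℝ)) =
      (-Complex.I * (1 / (2 * m : ℕ) +
        Complex.I * (1 / x : ℝ) / (2 * m : ℕ) ^ 2)) ^ (1 / 2 : ℂ) *
      ∑ r : Fin (2 * m), Complex.exp (π * Complex.I * (r : ℕ) ^ 2 / (2 * m : ℕ)) *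
        (HurwitzZeta.cosKernel (((r : ℕ) / (2 * m : ℕ) : ℝ) : UnitAddCircle) x : ℂ) := by
    filter_upwards [Filter.eventually_gt_atTop 0] with x hx
    have hxC : (x : ℂ) ≠ 0 := by exact_mod_cast hx.ne'
    have hfe := aux_fe m hm x hx
    rw [aux_split m hm (1 / x) (by positivity)] at hfe
    have hxp : ((x : ℂ) ^ (1 / 2 : ℂ)) ≠ 0 := by
      rw [Ne, Complex.cpow_eq_zero_iff]; tauto
    have hev : ∀ a : UnitAddCircle, (HurwitzZeta.evenKernel a (1 / x) : ℂ) =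
        (x : ℂ) ^ (1 / 2 : ℂ) * (HurwitzZeta.cosKernel a x : ℂ) := by
      intro a
      rw [HurwitzZeta.evenKernel_functional_equation, one_div_one_div,
        Real.div_rpow zero_le_one hx.le, Real.one_rpow, one_div_one_div]
      rw [Complex.ofReal_mul, Complex.ofReal_cpow hx.le]
      norm_num
    have hsplit : (-Complex.I * (Complex.I * x - 1 / (2 * m : ℕ))) ^ (1 / 2 : ℂ) =
        (x : ℂ) ^ (1 / 2 : ℂ) * (1 + Complex.I / (2 * m : ℕ) * (1 / x : ℝ)) ^ (1 / 2 : ℂ) := by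
      have e : -Complex.I * (Complex.I * x - 1 / (2 * m : ℕ)) =
          (x : ℂ) * (1 + Complex.I / (2 * m : ℕ) * (1 / x : ℝ)) := by
        push_cast
        field_simp
        ring_nf
        simp only [Complex.I_sq]
        ring
      have hn : (1 + Complex.I / (2 * m : ℕ) * (1 / x : ℝ) : ℂ) ≠ 0 := by
        have e' : (1 + Complex.I / (2 * m : ℕ) * (1 / x : ℝ) : ℂ) =
            1 + ((1 / (2 * m) * (1 / x) : ℝ) : ℂ) * Complex.I := by
          push_cast; ring
        intro h
        rw [e'] at h
        have := congrArg Complex.re h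
        simp only [Complex.add_re, Complex.mul_re, Complex.ofReal_re, Complex.ofReal_im,
          Complex.I_re, Complex.I_im, Complex.one_re, Complex.zero_re] at this
        norm_num at this
      rw [e, Complex.cpow_def_of_ne_zero (mul_ne_zero hxC hn), Complex.cpow_def_of_ne_zero hxC,
        Complex.cpow_def_of_ne_zero hn, ← Complex.exp_add, Complex.log_ofReal_mul hx hn,
        Complex.ofReal_log hx.le, add_mul]
    simp only [hev] at hfe
    rw [hsplit] at hfe
    apply mul_left_cancel₀ hxp
    rw [← mul_assoc]
    push_cast at hfe ⊢
    rw [← hfe, Finset.mul_sum, Finset.mul_sum, Finset.mul_sum]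
    refine Finset.sum_congr rfl fun r _ => ?_
    ring
  have hlim := tendsto_nhds_unique ((hL1.mul hL2).congr' (hEq.mono fun x h => h.symm))
    (hR1.mul hR2)
  have hs : ((Real.sqrt m : ℝ) : ℂ) ^ 2 = m := by
    rw [← Complex.ofReal_pow, Real.sq_sqrt hmR.le]; simp
  have hs0 : ((Real.sqrt m : ℝ) : ℂ) ≠ 0 := by
    exact_mod_cast (Real.sqrt_pos.mpr hmR).ne'
  have hc : (-Complex.I * (1 / (2 * m : ℕ))) ^ (1 / 2 : ℂ) =
      (1 - Complex.I) / (2 * (Real.sqrt m : ℂ)) := by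
    have e : (-Complex.I * (1 / (2 * m : ℕ)) : ℂ) =
        ((1 - Complex.I) / (2 * (Real.sqrt m : ℂ))) ^ 2 := by
      rw [div_pow, mul_pow, hs]
      push_cast
      field_simp
      ring_nf
      simp only [Complex.I_sq]
      ring
    rw [e, one_div, Complex.sq_cpow_two_inv]
    have : (1 - Complex.I) / (2 * (Real.sqrt m : ℂ)) =
        ((1 / (2 * Real.sqrt m) : ℝ) : ℂ) * (1 - Complex.I) := by
      push_cast; ring
    rw [this, Complex.re_ofReal_mul]
    have := Real.sqrt_pos.mpr hmR
    simp
    exact_mod_cast hm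
  rw [hc] at hlim
  simp only [mul_one] at hlim
  rw [div_mul_eq_mul_div, div_eq_iff (by simpa using hs0)] at hlim
  have h2 : (1 + Complex.I) * (1 - Complex.I) = 2 := by
    ring_nf; simp only [Complex.I_sq]; ring
  linear_combination (1 / 2) * (1 + Complex.I) * hlim -
    (1 / 2) * h2 * ∑ r : Fin (2 * m), Complex.exp (π * Complex.I * (r : ℕ) ^ 2 / (2 * m : ℕ))

lemma aux_sin (k : ℕ) (hk : 0 < k) :
    ∑ n ∈ Finset.range (4 * k), Real.sin (π * (n : ℝ) ^ 2 / (4 * k)) =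
      Real.sqrt (2 * (k : ℝ)) := by
  have h := congrArg Complex.im (aux_gauss (2 * k) (by omega))
  rw [Fin.sum_univ_eq_sum_range
    (fun r : ℕ => Complex.exp (π * Complex.I * (r : ℂ) ^ 2 / (2 * (2 * k) : ℕ))),
    Complex.im_sum] at h
  rw [show 4 * k = 2 * (2 * k) by ring]
  convert h using 1
  · refine Finset.sum_congr rfl fun n _ => ?_
    have : (π * Complex.I * (n : ℂ) ^ 2 / (2 * (2 * k) : ℕ) : ℂ) =
        ((π * (n : ℝ) ^ 2 / (4 * k) : ℝ) : ℂ) * Complex.I := by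
      push_cast; ring
    rw [this, Complex.exp_ofReal_mul_I_im]
  · simp

lemma aux_shift (f : ℕ → ℝ) (N : ℕ) (hf : ∀ n, f (n + N) = f n) (a : ℕ) :
    ∑ n ∈ Finset.range N, f (n + a) = ∑ n ∈ Finset.range N, f n := by
  induction a with
  | zero => simp
  | succ a ih =>
    rw [← ih]
    have h1 := Finset.sum_range_succ (fun n => f (n + a)) N
    have h2 := Finset.sum_range_succ' (fun n => f (n + a)) N
    have h3 : f (N + a) = f (0 + a) := by rw [add_comm, hf, zero_add]
    have h4 : ∀ n, f (n + 1 + a) = f (n + (a + 1)) := fun n => by congr 1; ring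
    simp only [h4] at h2
    linarith

lemma aux_mul (f : ℕ → ℝ) (N : ℕ) (hf : ∀ n, f (n + N) = f n) (p : ℕ) :
    ∑ n ∈ Finset.range (N * p), f n = p * ∑ n ∈ Finset.range N, f n := by
  induction p with
  | zero => simp
  | succ p ih =>
    rw [Nat.mul_succ, Finset.sum_range_add, ih]
    have := aux_shift f N hf (N * p)
    simp only [add_comm _ (N * p)] at this
    rw [this]
    push_cast
    ring

theorem extended_alternating_quadratic_sine_sum (k p : ℕ) (hk : 0 < k) (hp : 0 < p) :
    ∑ n ∈ Finset.Icc 1 (4 * k * p), (-1 : ℝ) ^ n *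
        Real.sin (π * (n : ℝ) ^ 2 / (4 * k)) =
      (p : ℝ) * (-1 : ℝ) ^ k * Real.sqrt (2 * (k : ℝ)) := by
  have hkR : (k : ℝ) ≠ 0 := by exact_mod_cast hk.ne'
  set g : ℕ → ℝ := fun n => Real.sin (π * (n : ℝ) ^ 2 / (4 * k)) with hg
  have hgN : ∀ n, g (n + 4 * k) = g n := by
    intro n
    simp only [hg]
    have : π * ((n + 4 * k : ℕ) : ℝ) ^ 2 / (4 * k) =
        π * (n : ℝ) ^ 2 / (4 * k) + ((n + 2 * k : ℕ) : ℝ) * (2 * π) := by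
      push_cast; field_simp; ring
    rw [this, Real.sin_add_nat_mul_two_pi]
  have hsh : ∀ n : ℕ, (-1 : ℝ) ^ n * Real.sin (π * (n : ℝ) ^ 2 / (4 * k)) =
      (-1 : ℝ) ^ k * g (n + 2 * k) := by
    intro n
    simp only [hg]
    have : π * ((n + 2 * k : ℕ) : ℝ) ^ 2 / (4 * k) =
        π * (n : ℝ) ^ 2 / (4 * k) + ((n + k : ℕ) : ℝ) * π := by
      push_cast; field_simp; ring
    rw [this, Real.sin_add_nat_mul_pi, pow_add]
    have : (-1 : ℝ) ^ k * (-1) ^ k = 1 := by rw [← mul_pow]; simp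
    linear_combination (-(-1 : ℝ) ^ n * Real.sin (π * (n : ℝ) ^ 2 / (4 * k))) * this
  simp only [hsh]
  rw [← Finset.mul_sum]
  have hI : ∑ n ∈ Finset.Icc 1 (4 * k * p), g (n + 2 * k) =
      ∑ n ∈ Finset.range (4 * k * p), g (n + (2 * k + 1)) := by
    rw [Finset.range_eq_Ico, ← Finset.Ico_add_one_right_eq_Icc,
      Finset.sum_Ico_eq_sum_range, Finset.range_eq_Ico]
    refine Finset.sum_congr (by simp) fun n _ => ?_
    congr 1; ring
  rw [hI, aux_mul (fun n => g (n + (2 * k + 1))) (4 * k)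
    (fun n => by
      rw [← hgN (n + (2 * k + 1))]; congr 1; ring), aux_shift g _ hgN, aux_sin k hk]
  ring
end

section
/- For all positive integers k and p, ∑_{n=1}^{2p(2k-1)} (-1)^n * sin(π n² / (2(2k-1))) = (-1)^k * p * √(2k-1). -/
open Finset Real

open Complex in
lemma theta_split (N : ℕ) (hN : 0 < N) (he : Even N) (x : ℝ) (hx : 0 < x) :
    jacobiTheta₂ 0 (1 / N + I / (x * N ^ 2)) =
      ∑ r : Fin N, cexp (π * I * (r : ℕ) ^ 2 / N) *
        ((x ^ (1 / 2 : ℝ) * HurwitzZeta.cosKernel (((r : ℕ) / N : ℝ) : UnitAddCircle) x : ℝ) : ℂ) := by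
  have : NeZero N := ⟨hN.ne'⟩
  have hN' : (N : ℂ) ≠ 0 := by exact_mod_cast hN.ne'
  have hx' : (x : ℂ) ≠ 0 := by exact_mod_cast hx.ne'
  have him : 0 < (1 / N + I / (x * N ^ 2) : ℂ).im := by
    have : (1 / N + I / (x * N ^ 2) : ℂ) = ((1 / N : ℝ) : ℂ) + ((1 / (x * N ^ 2) : ℝ) : ℂ) * I := by
      push_cast; field_simp
    rw [this]
    simp only [add_im, ofReal_im, mul_im, ofReal_re, I_im, I_re]
    have : 0 < 1 / (x * (N : ℝ) ^ 2) := by positivity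
    linarith
  have h1 := hasSum_jacobiTheta₂_term 0 him
  rw [← (Int.divModEquiv N).symm.hasSum_iff, ← (Equiv.prodComm _ _).hasSum_iff] at h1
  have h2 : ∀ r : Fin N, HasSum (fun k : ℤ => (jacobiTheta₂_term · 0 (1 / N + I / (x * N ^ 2))) 
      ((Int.divModEquiv N).symm (k, r))) (cexp (π * I * (r : ℕ) ^ 2 / N) *
        ((x ^ (1 / 2 : ℝ) * HurwitzZeta.cosKernel (((r : ℕ) / N : ℝ) : UnitAddCircle) x : ℝ) : ℂ)) := by
    intro r
    have h3 := HurwitzZeta.hasSum_int_evenKernel ((r : ℕ) / N : ℝ) (t := 1 / x) (by positivity)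
    rw [HurwitzZeta.evenKernel_functional_equation, one_div_one_div] at h3
    have e : 1 / (1 / x) ^ (1 / 2 : ℝ) = x ^ (1 / 2 : ℝ) := by
      rw [one_div x, Real.inv_rpow hx.le, one_div, inv_inv]
    rw [e, ← hasSum_ofReal] at h3
    have h4 := h3.mul_left (cexp (π * I * (r : ℕ) ^ 2 / N))
    obtain ⟨j, hj⟩ := he
    have hj2 : (N : ℂ) = 2 * j := by rw [hj]; push_cast; ring
    refine h4.congr_fun ?_
    intro n
    dsimp only
    rw [jacobiTheta₂_term, Int.divModEquiv_symm_apply, ofReal_exp, ← Complex.exp_add,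
      Complex.exp_eq_exp_iff_exists_int]
    refine ⟨n ^ 2 * j + n * (r : ℕ), ?_⟩
    have e3 : ((n ^ 2 * j + n * (r : ℕ) : ℤ) : ℂ) * (2 * π * I) =
        (n ^ 2 * N + 2 * n * (r : ℕ)) * (π * I) := by
      rw [hj2]; push_cast; ring
    rw [e3]
    push_cast
    field_simp
    ring_nf
    simp only [I_sq]
    ring
  have h5 := h1.prod_fiberwise h2
  rw [← h5.tsum_eq, tsum_fintype]

open Complex in
lemma theta_transform (N : ℕ) (hN : 0 < N) (he : Even N) (x : ℝ) (hx : 0 < x) :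
    jacobiTheta₂ 0 (1 / N + I / (x * N ^ 2)) =
      1 / (-I * (1 / N + I / (x * N ^ 2))) ^ (1 / 2 : ℂ) *
        ((x ^ (1 / 2 : ℝ) : ℝ) * (1 + I / (N * x)) ^ (1 / 2 : ℂ)) *
        jacobiTheta (-1 / N + I * x) := by
  have hN' : (N : ℂ) ≠ 0 := by exact_mod_cast hN.ne'
  have hx' : (x : ℂ) ≠ 0 := by exact_mod_cast hx.ne'
  have hper : ∀ (j : ℕ) (τ : ℂ), jacobiTheta₂ 0 (τ + 2 * j) = jacobiTheta₂ 0 τ := by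
    intro j τ
    induction j with
    | zero => simp
    | succ j ih =>
      rw [← ih, ← jacobiTheta₂_add_right 0 (τ + 2 * j)]
      congr 1; push_cast; ring
  obtain ⟨j, hj⟩ := he
  have hNx : (x * N + I : ℂ) ≠ 0 := by
    intro h
    have := congrArg Complex.im h
    simp at this
  set w : ℂ := I / (x + I / N) with hw
  have hden : (x + I / N : ℂ) ≠ 0 := by
    intro h; apply hNx; field_simp at h; simpa using h
  have h1 : -1 / (1 / N + I / (x * N ^ 2) : ℂ) + 2 * j = w := by
    have : (2 * j : ℂ) = N := by rw [hj]; push_cast; ring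
    rw [this, hw]
    have : (1 / N + I / (x * N ^ 2) : ℂ) = (x * N + I) / (x * N ^ 2) := by field_simp
    rw [this]
    have : (x + I / N : ℂ) = (x * N + I) / N := by field_simp
    rw [this]
    field_simp
    ring
  rw [jacobiTheta₂_functional_equation 0, zero_div, ← hper j, h1,
    jacobiTheta₂_functional_equation 0 w, zero_div, jacobiTheta_eq_jacobiTheta₂]
  have h2 : -1 / w = -1 / N + I * x := by
    rw [hw]; field_simp; ring_nf; simp; try ring
  have h3 : -I * w = (x + I / N : ℂ)⁻¹ := by
    rw [hw, ← mul_div_assoc]; simp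
  have h4 : (x + I / N : ℂ) = (x : ℂ) * (1 + I / (N * x)) := by field_simp
  have harg : (x + I / N : ℂ).arg ≠ π := by
    have : (x + I / N : ℂ) ∈ slitPlane := by
      left
      have : (I / N : ℂ).re = 0 := by simp
      simp [hx]
    exact slitPlane_arg_ne_pi this
  have h5 : 1 / (-I * w) ^ (1 / 2 : ℂ) = (x ^ (1 / 2 : ℝ) : ℝ) * (1 + I / (N * x)) ^ (1 / 2 : ℂ) := by
    rw [h3, inv_cpow _ _ harg, one_div, inv_inv, h4]
    have hne : (1 + I / (N * x) : ℂ) ≠ 0 := by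
      intro h; rw [h4, h] at hden; simp at hden
    rw [cpow_def_of_ne_zero (mul_ne_zero hx' hne), cpow_def_of_ne_zero hne,
      log_ofReal_mul hx hne, ofReal_cpow hx.le, cpow_def_of_ne_zero hx', ← Complex.exp_add,
      ← ofReal_log hx.le]
    congr 1; push_cast; ring
  rw [h5, h2]
  simp
  ring

open Complex Filter Topology in
lemma gauss_even (N : ℕ) (hN : 0 < N) (he : Even N) :
    ∑ r ∈ Finset.range N, cexp (π * I * r ^ 2 / N) = 1 / (-I * (1 / N)) ^ (1 / 2 : ℂ) := by
  rw [← Fin.sum_univ_eq_sum_range (fun r : ℕ => cexp (π * I * r ^ 2 / N))]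
  have hN' : (N : ℂ) ≠ 0 := by exact_mod_cast hN.ne'
  have hinv : Tendsto (fun x : ℝ => ((x⁻¹ : ℝ) : ℂ)) atTop (𝓝 0) := by
    have := (continuous_ofReal.tendsto 0).comp tendsto_inv_atTop_zero
    simpa [Function.comp_def] using this
  have hL : Tendsto (fun x : ℝ => ∑ r : Fin N, cexp (π * I * (r : ℕ) ^ 2 / N) *
        ((HurwitzZeta.cosKernel (((r : ℕ) / N : ℝ) : UnitAddCircle) x : ℝ) : ℂ)) atTop
        (𝓝 (∑ r : Fin N, cexp (π * I * (r : ℕ) ^ 2 / N) * 1)) := by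
    refine tendsto_finsetSum _ fun r _ => Tendsto.const_mul _ ?_
    obtain ⟨p, hp, h⟩ := HurwitzZeta.isBigO_atTop_cosKernel_sub (((r : ℕ) / N : ℝ) : UnitAddCircle)
    have h0 : Tendsto (fun x : ℝ => Real.exp (-p * x)) atTop (𝓝 0) := by
      refine Real.tendsto_exp_atBot.comp ?_
      exact tendsto_id.const_mul_atTop_of_neg (by linarith)
    have h1 := (h.trans_tendsto h0).add_const 1
    simp only [sub_add_cancel, zero_add] at h1
    have := (continuous_ofReal.tendsto 1).comp h1
    simpa [Function.comp_def] using this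
  have hR : Tendsto (fun x : ℝ => 1 / (-I * (1 / N + I / (x * N ^ 2))) ^ (1 / 2 : ℂ) *
        ((1 + I / (N * x)) ^ (1 / 2 : ℂ)) *
        jacobiTheta (-1 / N + I * x)) atTop (𝓝 (1 / (-I * (1 / N)) ^ (1 / 2 : ℂ) * 1 * 1)) := by
    refine (Tendsto.mul ?_ ?_).mul ?_
    · refine Tendsto.div tendsto_const_nhds ?_ ?_
      · refine Filter.Tendsto.cpow ?_ tendsto_const_nhds ?_
        · have := ((hinv.const_mul (I / N ^ 2)).const_add (1 / (N : ℂ))).const_mul (-I)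
          simp only [mul_zero, add_zero] at this
          refine this.congr fun x => ?_
          push_cast; field_simp
        · right
          have : (-I * (1 / N) : ℂ) = ((-(1 / N) : ℝ) : ℂ) * I := by push_cast; ring
          rw [this, im_ofReal_mul, I_im]
          have : (0 : ℝ) < 1 / N := by positivity
          linarith
      · rw [Ne, cpow_eq_zero_iff]
        simp [hN.ne']
    · have h1 : Tendsto (fun x : ℝ => (1 + I / (N * x) : ℂ)) atTop (𝓝 1) := by
        have := (hinv.const_mul (I / N)).const_add (1 : ℂ)
        simp only [mul_zero, add_zero] at this
        refine this.congr fun x => ?_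
        push_cast; field_simp
      have := Filter.Tendsto.cpow h1 (tendsto_const_nhds (x := (1 / 2 : ℂ))) (by simp)
      simpa using this
    · have him : Tendsto (fun x : ℝ => (-1 / N + I * x : ℂ)) atTop (comap im atTop) := by
        rw [tendsto_comap_iff]
        refine tendsto_id.congr fun x => ?_
        have : (-1 / N + I * x : ℂ) = ((-1 / N : ℝ) : ℂ) + x * I := by push_cast; ring
        simp only [Function.comp, this]
        simp
      have h0 : Tendsto (fun τ : ℂ => Real.exp (-π * τ.im)) (comap im atTop) (𝓝 0) := by
        refine Real.tendsto_exp_atBot.comp ?_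
        exact tendsto_comap.const_mul_atTop_of_neg (by linarith [Real.pi_pos])
      have h1 := ((isBigO_at_im_infty_jacobiTheta_sub_one.trans_tendsto h0).add_const 1).comp him
      simpa [Function.comp_def] using h1
  have := tendsto_nhds_unique_of_eventuallyEq hL hR ?_
  · simpa using this
  · filter_upwards [eventually_gt_atTop 0] with x hx
    have h := (theta_split N hN he x hx).symm.trans (theta_transform N hN he x hx)
    have hs : ((x ^ (1 / 2 : ℝ) : ℝ) : ℂ) ≠ 0 := by
      exact_mod_cast (Real.rpow_pos_of_pos hx _).ne'
    apply mul_left_cancel₀ hs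
    rw [Finset.mul_sum]
    calc _ = _ := by
          refine Finset.sum_congr rfl fun r _ => ?_
          rw [mul_left_comm, ← ofReal_mul]
      _ = _ := h
      _ = _ := by ring

open Complex in
lemma gauss_val (N : ℕ) (hN : 0 < N) :
    1 / (-I * (1 / N)) ^ (1 / 2 : ℂ) = (Real.sqrt N : ℂ) * cexp (π / 4 * I) := by
  have hN' : (0 : ℝ) < N := by positivity
  have h : (-I * (1 / N) : ℂ) = ((1 / N : ℝ) : ℂ) * (-I) := by push_cast; ring
  have hI : (-I : ℂ) ≠ 0 := by simp
  have h1 : (((1 / N : ℝ) : ℂ)) ≠ 0 := by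
    exact_mod_cast (one_div_pos.mpr hN').ne'
  rw [h, cpow_def_of_ne_zero (mul_ne_zero h1 hI), log_ofReal_mul (by positivity) hI, log_neg_I,
    one_div, ← Complex.exp_neg, Real.sqrt_eq_rpow, Real.rpow_def_of_pos hN', ofReal_exp,
    ← Complex.exp_add, one_div, Real.log_inv]
  congr 1; push_cast; ring

lemma sum_shift {M : Type*} [AddCommGroup M] (g : ℕ → M) (N : ℕ) (hg : ∀ n, g (n + N) = g n) (m : ℕ) :
    ∑ n ∈ Finset.range N, g (n + m) = ∑ n ∈ Finset.range N, g n := by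
  induction m with
  | zero => simp
  | succ m ih =>
    rw [← ih]
    have h1 := Finset.sum_range_succ (fun n => g (n + m)) N
    have h2 := Finset.sum_range_succ' (fun n => g (n + m)) N
    rw [h1] at h2
    have h3 : g (N + m) = g (0 + m) := by rw [add_comm N m, hg, zero_add]
    simp only [h3] at h2
    rw [add_right_cancel h2]
    exact Finset.sum_congr rfl fun n _ => by congr 1; ring

lemma sum_periods (f : ℕ → ℝ) (N : ℕ) (hf : ∀ n, f (n + N) = f n) (p : ℕ) :
    ∑ n ∈ Finset.range (p * N), f n = p * ∑ n ∈ Finset.range N, f n := by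
  induction p with
  | zero => simp
  | succ p ih =>
    rw [add_mul, one_mul, Finset.sum_range_add, ih]
    have := sum_shift f N hf (p * N)
    simp only [add_comm (p * N)]
    rw [this]; push_cast; ring

open Complex in
lemma gauss_sum_im (m : ℕ) (hm : 0 < m) :
    ∑ n ∈ Finset.range (2 * m), (-1 : ℝ) ^ n * Real.sin (π * (n : ℝ) ^ 2 / (2 * m)) =
      Real.sqrt (2 * m) * Real.sin (π / 4 - π * m / 2) := by
  have hm' : (m : ℂ) ≠ 0 := by exact_mod_cast hm.ne'
  have hG := (gauss_even (2 * m) (by positivity) (even_two_mul m)).trans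
    (gauss_val (2 * m) (by positivity))
  rw [← sum_shift (fun n : ℕ => cexp (π * I * n ^ 2 / (2 * m : ℕ))) (2 * m) ?_ m] at hG
  · have hG2 := congrArg (fun z => (cexp (-(π * m / 2) * I) * z).im) hG
    simp only [Finset.mul_sum, im_sum] at hG2
    have e2 : (cexp (-(π * m / 2) * I) * ((Real.sqrt (2 * m : ℕ) : ℂ) * cexp (π / 4 * I))).im =
        Real.sqrt (2 * m) * Real.sin (π / 4 - π * m / 2) := by
      rw [mul_left_comm, ← Complex.exp_add, im_ofReal_mul]
      have : (-(π * m / 2) * I + π / 4 * I : ℂ) = ((π / 4 - π * m / 2 : ℝ) : ℂ) * I := by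
        push_cast; ring
      rw [this, exp_ofReal_mul_I_im]; push_cast; rfl
    rw [← e2, ← hG2]
    refine Finset.sum_congr rfl fun n _ => ?_
    rw [← Complex.exp_add]
    have : (-(π * m / 2) * I + π * I * ((n + m : ℕ) : ℂ) ^ 2 / (2 * m : ℕ) : ℂ) =
        n * (π * I) + ((π * (n : ℝ) ^ 2 / (2 * m) : ℝ) : ℂ) * I := by
      push_cast; field_simp; ring
    rw [this, Complex.exp_add, Complex.exp_nat_mul, exp_pi_mul_I]
    have h : ((-1 : ℂ) ^ n) = (((-1 : ℝ) ^ n : ℝ) : ℂ) := by push_cast; rfl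
    rw [h, im_ofReal_mul, exp_ofReal_mul_I_im]
  · intro n
    rw [Complex.exp_eq_exp_iff_exists_int]
    refine ⟨n + m, ?_⟩
    push_cast; field_simp; ring

theorem extended_alternating_sine_sum_odd (k p : ℕ) (hk : 0 < k) (hp : 0 < p) :
    ∑ n ∈ Finset.Icc 1 (2 * p * (2 * k - 1)), (-1 : ℝ) ^ n *
        Real.sin (π * (n : ℝ) ^ 2 / (2 * (2 * (k : ℝ) - 1))) =
      (-1 : ℝ) ^ k * (p : ℝ) * Real.sqrt (2 * (k : ℝ) - 1) := by
  obtain ⟨m, hm⟩ : ∃ m, m = 2 * k - 1 := ⟨_, rfl⟩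
  have hm0 : 0 < m := by omega
  have hmr : (2 * (k : ℝ) - 1) = m := by
    rw [hm, Nat.cast_sub (by omega)]; push_cast; ring
  have hm0' : (m : ℝ) ≠ 0 := by exact_mod_cast hm0.ne'
  rw [hmr, ← hm, show 2 * p * m = p * (2 * m) by ring]
  set f : ℕ → ℝ := fun n => (-1 : ℝ) ^ n * Real.sin (π * (n : ℝ) ^ 2 / (2 * m)) with hf
  have hper : ∀ n, f (n + 2 * m) = f n := by
    intro n
    simp only [hf]
    rw [pow_add, pow_mul, neg_one_sq, one_pow, mul_one]
    have : π * ((n + 2 * m : ℕ) : ℝ) ^ 2 / (2 * m) =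
        π * (n : ℝ) ^ 2 / (2 * m) + ((n + m : ℕ) : ℝ) * (2 * π) := by
      push_cast; field_simp; ring
    rw [this, Real.sin_add_nat_mul_two_pi]
  have h0 : f 0 = 0 := by simp [hf]
  have hlast : ∀ q : ℕ, f (q * (2 * m)) = 0 := by
    intro q
    induction q with
    | zero => simpa using h0
    | succ q ih => rw [add_mul, one_mul, hper, ih]
  have hIcc : ∑ n ∈ Finset.Icc 1 (p * (2 * m)), f n = ∑ n ∈ Finset.range (p * (2 * m)), f n := by
    have h1 := Finset.sum_range_succ f (p * (2 * m))
    rw [hlast, add_zero] at h1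
    rw [← h1, Finset.sum_range_succ', h0, add_zero, Finset.range_eq_Ico,
      Finset.sum_Ico_add' f 0 (p * (2 * m)) 1]
    rfl
  rw [hIcc, sum_periods f (2 * m) hper p, gauss_sum_im m hm0]
  have hs : Real.sin (π / 4 - π * m / 2) = (-1) ^ k * (Real.sqrt 2 / 2) := by
    have : π / 4 - π * m / 2 = (π - π / 4) - k * π := by rw [← hmr]; ring
    rw [this, Real.sin_sub_nat_mul_pi, Real.sin_pi_sub, Real.sin_pi_div_four]
  rw [hs, Real.sqrt_mul (by norm_num)]
  have := Real.mul_self_sqrt (show (0 : ℝ) ≤ 2 by norm_num)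
  linear_combination ((p : ℝ) * (-1) ^ k * Real.sqrt m / 2) * this
end

section
/- For all positive integers k and p, ∑_{n=1}^{p(4k-1)} (-1)^n * sin(π n² / (4k-1)) = (-1)^k * p * √(4k-1). -/
open Finset Real

open Complex in
noncomputable def thetaAux (w : ℂ) (x : ℝ) : ℂ :=
  ∑' n : ℤ, cexp (-π * w * (n : ℂ) ^ 2 + 2 * π * (I * x) * n)

open Complex in
lemma summable_gauss_aux (w : ℂ) (hw : 0 < w.re) (x : ℝ) :
    Summable (fun n : ℤ => cexp (-π * w * (n : ℂ) ^ 2 + 2 * π * (I * x) * n)) := by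
  have h := (summable_jacobiTheta₂_term_iff (x : ℂ) (I * w)).2 (by simpa using hw)
  refine h.congr (fun n => ?_)
  unfold jacobiTheta₂_term
  congr 1
  linear_combination (π * n ^ 2 * w : ℂ) * I_sq

open Complex in
lemma norm_gauss_aux (w : ℂ) (x : ℝ) (n : ℤ) :
    ‖cexp (-π * w * (n : ℂ) ^ 2 + 2 * π * (I * x) * n)‖ = Real.exp (-π * w.re * (n : ℝ) ^ 2) := by
  rw [Complex.norm_exp]
  congr 1
  have : (-π * w * (n : ℂ) ^ 2 + 2 * π * (I * x) * n : ℂ) =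
    ((-π * (n : ℝ) ^ 2 : ℝ) : ℂ) * w + ((2 * π * x * n : ℝ) : ℂ) * I := by
    push_cast; ring
  rw [this, add_re, re_ofReal_mul, re_ofReal_mul]
  simp
  ring

open Complex Filter Topology in
lemma thetaAux_tendsto (c x : ℝ) :
    Tendsto (fun δ : ℝ => thetaAux ((δ : ℂ)⁻¹ - I * c) x) (𝓝[>] 0) (𝓝 1) := by
  have hre : ∀ δ : ℝ, ((δ : ℂ)⁻¹ - I * c).re = δ⁻¹ := by
    intro δ
    rw [← ofReal_inv]
    simp
  have h1 : (1 : ℂ) = ∑' n : ℤ, (if n = 0 then (1 : ℂ) else 0) := by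
    rw [tsum_ite_eq]
  rw [h1]
  unfold thetaAux
  refine tendsto_tsum_of_dominated_convergence
    (bound := fun n : ℤ => Real.exp (-π * (n : ℝ) ^ 2)) ?_ ?_ ?_
  · have := (summable_gauss_aux 1 (by simp) 0).norm
    refine this.congr (fun n => ?_)
    rw [norm_gauss_aux]
    simp
  · intro n
    split_ifs with hn
    · subst hn
      simp
    · rw [tendsto_zero_iff_norm_tendsto_zero]
      simp_rw [norm_gauss_aux, hre]
      apply Real.tendsto_exp_atBot.comp
      have hn2 : (0 : ℝ) < π * (n : ℝ) ^ 2 := by positivity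
      have := (tendsto_inv_nhdsGT_zero (𝕜 := ℝ)).const_mul_atTop_of_neg
        (r := -(π * (n : ℝ) ^ 2)) (by linarith)
      refine this.congr (fun δ => by ring)
  · have : ∀ᶠ δ : ℝ in 𝓝[>] 0, δ ∈ Set.Ioo (0 : ℝ) 1 := Ioo_mem_nhdsGT one_pos
    filter_upwards [this] with δ hδ n
    rw [norm_gauss_aux, hre]
    apply Real.exp_le_exp.2
    have h1 : 1 ≤ δ⁻¹ := (one_le_inv₀ hδ.1).2 hδ.2.le
    have : 0 ≤ π * (n : ℝ) ^ 2 := by positivity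
    nlinarith

/-- The complex quadratic sum. -/
noncomputable def gaussT (N : ℕ) : ℂ :=
  ∑ r ∈ Finset.range N, Complex.exp (Complex.I * π * r + Complex.I * π * (r : ℂ) ^ 2 / N)

open Complex in
lemma E_one (N : ℕ) (hN : 0 < N) (δ : ℝ) (hδ : 0 < δ) :
    thetaAux ((δ + I * N : ℂ)⁻¹) (1 / 2) =
      1 / ((δ + I * N : ℂ)⁻¹) ^ (1 / 2 : ℂ) * cexp (-π * I * N / 4) *
        (((δ : ℂ)⁻¹) ^ (1 / 2 : ℂ) * thetaAux ((δ : ℂ)⁻¹) (1 / 2)) := by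
  have hz : (δ + I * N : ℂ) ≠ 0 := by
    intro h
    have := congrArg Complex.re h
    simp at this
    exact hδ.ne' this
  have hre : 0 < ((δ + I * N : ℂ)⁻¹).re := by
    rw [inv_re]
    apply div_pos
    · simpa using hδ
    · exact normSq_pos.2 hz
  have hδ' : 0 < ((δ : ℂ)⁻¹).re := by
    rw [← ofReal_inv, ofReal_re]; positivity
  have hne : ((δ : ℂ)⁻¹) ^ (1 / 2 : ℂ) ≠ 0 := by
    rw [Ne, cpow_eq_zero_iff]
    simp [hδ.ne']
  unfold thetaAux
  rw [Complex.tsum_exp_neg_quadratic hre, Complex.tsum_exp_neg_quadratic hδ', mul_assoc]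
  congr 1
  rw [← mul_assoc (((δ : ℂ)⁻¹) ^ (1 / 2 : ℂ)), mul_one_div_cancel hne, one_mul, ← tsum_mul_left]
  congr 1
  ext n
  rw [← Complex.exp_add]
  obtain ⟨j, hj⟩ := Int.even_mul_pred_self n
  have hj' : (n : ℂ) * (n - 1) = j + j := by exact_mod_cast congrArg (Int.cast : ℤ → ℂ) hj
  rw [Complex.exp_eq_exp_iff_exists_int]
  refine ⟨-(N * j), ?_⟩
  push_cast
  rw [div_inv_eq_mul, div_inv_eq_mul]
  have h2 : (n : ℂ) + I * (I * (1 / 2)) = n - 1 / 2 := by linear_combination (1 / 2 : ℂ) * I_sq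
  rw [h2]
  linear_combination (-π * I * N : ℂ) * hj'

open Complex in
lemma E_two (N : ℕ) (hN : 0 < N) (δ : ℝ) (hδ : 0 < δ) :
    thetaAux ((δ + I * N : ℂ)⁻¹) (1 / 2) =
      ∑ r ∈ Finset.range N, cexp (I * π * r + I * π * (r : ℂ) ^ 2 / N) *
        (((δ : ℂ)⁻¹ - I * (1 / N : ℝ)) ^ (1 / 2 : ℂ) *
          thetaAux ((δ : ℂ)⁻¹ - I * (1 / N : ℝ)) (-(r / N))) := by
  have hz : (δ + I * N : ℂ) ≠ 0 := by
    intro h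
    have := congrArg Complex.re h
    simp at this
    exact hδ.ne' this
  have hre : 0 < ((δ + I * N : ℂ)⁻¹).re := by
    rw [inv_re]
    apply div_pos
    · simpa using hδ
    · exact normSq_pos.2 hz
  set w : ℂ := (δ : ℂ)⁻¹ - I * (1 / N : ℝ) with hw
  have hδ' : 0 < w.re := by
    rw [hw, ← ofReal_inv]
    simpa using hδ
  have hw0 : w ≠ 0 := by
    intro h
    rw [h] at hδ'
    simp at hδ'
  have hne : w ^ (1 / 2 : ℂ) ≠ 0 := by
    rw [Ne, cpow_eq_zero_iff]
    simp [hw0]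
  have hNc : (N : ℂ) ≠ 0 := by exact_mod_cast hN.ne'
  have hδc : (δ : ℂ) ≠ 0 := by exact_mod_cast hδ.ne'
  have hid : (δ + I * N : ℂ)⁻¹ = w⁻¹ / N ^ 2 - I / N := by
    have hwe : w = (N - I * δ) / (δ * N) := by
      rw [hw]; push_cast; field_simp
    have hz2 : (N - I * δ : ℂ) ≠ 0 := by
      intro h
      rw [h] at hwe
      simp at hwe
      exact hw0 hwe
    have hz3 : (δ + I * N : ℂ) = I * (N - I * δ) := by linear_combination (δ : ℂ) * I_sq
    have hu : (δ : ℂ) = -I * (N - (N - I * δ)) := by linear_combination (δ : ℂ) * I_sq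
    rw [hwe, hz3, mul_inv, inv_I]
    generalize (N - I * δ : ℂ) = u at hz2 hu
    have h5 : (u / (δ * N) : ℂ)⁻¹ / N ^ 2 = δ / (u * N) := by field_simp
    rw [h5, hu]
    field_simp
    ring
  have hsum := summable_gauss_aux _ hre (1 / 2)
  have : NeZero N := ⟨hN.ne'⟩
  have hsum' := (Equiv.summable_iff (Int.divModEquiv N).symm).2 hsum
  unfold thetaAux
  rw [← Equiv.tsum_eq (Int.divModEquiv N).symm, ← Equiv.tsum_eq (Equiv.prodComm (Fin N) ℤ),
    Summable.tsum_prod (by exact (Equiv.summable_iff (Equiv.prodComm (Fin N) ℤ)).2 hsum'), tsum_fintype,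
    Finset.sum_range]
  refine Finset.sum_congr rfl (fun r _ => ?_)
  rw [Complex.tsum_exp_neg_quadratic hδ', ← mul_assoc (w ^ (1 / 2 : ℂ)), mul_one_div_cancel hne,
    one_mul, ← tsum_mul_left]
  congr 1
  ext m
  rw [← Complex.exp_add, Complex.exp_eq_exp_iff_exists_int]
  obtain ⟨j, hj⟩ := Int.even_mul_succ_self m
  have hj' : (m : ℂ) * (m + 1) = j + j := by exact_mod_cast congrArg (Int.cast : ℤ → ℂ) hj
  refine ⟨N * j + m * r, ?_⟩
  simp only [Equiv.prodComm_apply, Prod.swap_prod_mk, Int.divModEquiv_symm_apply]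
  rw [hid]
  push_cast
  have h2 : (m : ℂ) + I * (I * -(r / N)) = m + r / N := by
    linear_combination (-(r / N) : ℂ) * I_sq
  rw [h2]
  field_simp
  linear_combination (I * N ^ 3 * w : ℂ) * hj'

open Complex in
lemma real_mul_cpow_aux (s : ℝ) (hs : 0 < s) (z : ℂ) (hz : z ≠ 0) (c : ℂ) :
    ((s : ℂ) * z) ^ c = (s : ℂ) ^ c * z ^ c := by
  have hs' : (s : ℂ) ≠ 0 := by exact_mod_cast hs.ne'
  rw [cpow_def_of_ne_zero (mul_ne_zero hs' hz), cpow_def_of_ne_zero hs', cpow_def_of_ne_zero hz,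
    ← Complex.exp_add, log_ofReal_mul hs hz, ofReal_log hs.le]
  ring_nf

open Complex Filter Topology in
lemma gaussT_eq (N : ℕ) (hN : 0 < N) :
    gaussT N = 1 / ((I * N : ℂ)⁻¹) ^ (1 / 2 : ℂ) * cexp (-π * I * N / 4) := by
  have hNc : (N : ℂ) ≠ 0 := by exact_mod_cast hN.ne'
  have hof : Tendsto (fun δ : ℝ => (δ : ℂ)) (𝓝[>] 0) (𝓝 0) := by
    have : Tendsto (fun δ : ℝ => (δ : ℂ)) (𝓝 0) (𝓝 ((0 : ℝ) : ℂ)) :=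
      Complex.continuous_ofReal.tendsto 0
    rw [ofReal_zero] at this
    exact this.mono_left nhdsWithin_le_nhds
  have hL : Tendsto (fun δ : ℝ => ∑ r ∈ Finset.range N,
      cexp (I * π * r + I * π * (r : ℂ) ^ 2 / N) *
        ((1 - I * (1 / N : ℝ) * δ : ℂ) ^ (1 / 2 : ℂ) *
          thetaAux ((δ : ℂ)⁻¹ - I * (1 / N : ℝ)) (-(r / N)))) (𝓝[>] 0) (𝓝 (gaussT N)) := by
    unfold gaussT
    refine tendsto_finsetSum _ (fun r _ => ?_)
    have h1 : Tendsto (fun δ : ℝ => (1 - I * (1 / N : ℝ) * δ : ℂ) ^ (1 / 2 : ℂ))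
        (𝓝[>] 0) (𝓝 1) := by
      have := (tendsto_const_nhds (x := (1 : ℂ))).sub (hof.const_mul (I * (1 / N : ℝ)))
      rw [mul_zero, sub_zero] at this
      have h := this.cpow (tendsto_const_nhds (x := (1 / 2 : ℂ))) (by simp)
      simpa using h
    have := (h1.mul (thetaAux_tendsto (1 / N) (-(r / N)))).const_mul
      (cexp (I * π * r + I * π * (r : ℂ) ^ 2 / N))
    simpa using this
  have hR : Tendsto (fun δ : ℝ => 1 / ((δ + I * N : ℂ)⁻¹) ^ (1 / 2 : ℂ) *
      cexp (-π * I * N / 4) * thetaAux ((δ : ℂ)⁻¹) (1 / 2)) (𝓝[>] 0)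
      (𝓝 (1 / ((I * N : ℂ)⁻¹) ^ (1 / 2 : ℂ) * cexp (-π * I * N / 4))) := by
    have h0 : (I * N : ℂ) ≠ 0 := mul_ne_zero I_ne_zero hNc
    have h1 := (hof.add_const (I * N : ℂ))
    rw [zero_add] at h1
    have h2 := (h1.inv₀ h0).cpow (tendsto_const_nhds (x := (1 / 2 : ℂ))) (by
      right
      rw [mul_inv, inv_I, ← ofReal_natCast, ← ofReal_inv]
      simp [hN.ne'])
    have h3 := (h2.inv₀ (by
      rw [Ne, cpow_eq_zero_iff]
      simp [hN.ne'])).mul_const (cexp (-π * I * N / 4))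
    have h4 := h3.mul (thetaAux_tendsto 0 (1 / 2))
    simpa using h4
  refine tendsto_nhds_unique (hL.congr' ?_) hR
  filter_upwards [self_mem_nhdsWithin] with δ hδ
  have hδ : 0 < δ := hδ
  have hδc : (δ : ℂ) ≠ 0 := by exact_mod_cast hδ.ne'
  have h := (E_two N hN δ hδ).symm.trans (E_one N hN δ hδ)
  have hne : ((δ : ℂ)⁻¹) ^ (1 / 2 : ℂ) ≠ 0 := by
    rw [Ne, cpow_eq_zero_iff]
    simp [hδ.ne']
  have hfac : ((δ : ℂ)⁻¹ - I * (1 / N : ℝ)) ^ (1 / 2 : ℂ) =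
      ((δ : ℂ)⁻¹) ^ (1 / 2 : ℂ) * (1 - I * (1 / N : ℝ) * δ : ℂ) ^ (1 / 2 : ℂ) := by
    rw [← ofReal_inv, ← real_mul_cpow_aux _ (inv_pos.2 hδ)]
    · congr 1
      push_cast
      field_simp
    · intro h
      have := congrArg Complex.re h
      simp at this
  apply mul_left_cancel₀ hne
  rw [hfac] at h
  rw [Finset.mul_sum]
  rw [mul_left_comm] at h
  rw [← h]
  exact Finset.sum_congr rfl (fun r _ => by ring)

open Complex in
lemma gaussT_im (k N : ℕ) (hN : N + 1 = 4 * k) (hN0 : 0 < N) :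
    (gaussT N).im = (-1 : ℝ) ^ k * Real.sqrt N := by
  have hNr : (0 : ℝ) < N := by exact_mod_cast hN0
  have hNc : (N : ℂ) ≠ 0 := by exact_mod_cast hN0.ne'
  have hs : ((I * N : ℂ)⁻¹) ^ (1 / 2 : ℂ) = ((Real.sqrt N : ℝ) : ℂ)⁻¹ * cexp (-(π * I / 4)) := by
    have : (I * N : ℂ)⁻¹ = (((N : ℝ)⁻¹ : ℝ) : ℂ) * (-I) := by
      rw [mul_inv, inv_I]; push_cast; ring
    rw [this, real_mul_cpow_aux _ (inv_pos.2 hNr) _ (by simp)]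
    congr 1
    · rw [Real.sqrt_eq_rpow, ← ofReal_inv, ← Real.inv_rpow hNr.le,
        ofReal_cpow (inv_pos.2 hNr).le]
      push_cast
      rfl
    · rw [cpow_def_of_ne_zero (by simp), log_neg_I]
      congr 1
      ring
  rw [gaussT_eq N hN0, hs]
  have hNk : (N : ℂ) = 4 * k - 1 := by
    rw [eq_sub_iff_add_eq]; exact_mod_cast hN
  have : 1 / (((Real.sqrt N : ℝ) : ℂ)⁻¹ * cexp (-(π * I / 4))) * cexp (-π * I * N / 4) =
      (((-1 : ℝ) ^ k * Real.sqrt N : ℝ) : ℂ) * I := by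
    rw [Complex.exp_neg, one_div, mul_inv, inv_inv, inv_inv, mul_assoc, ← Complex.exp_add, hNk]
    have h1 : (π * I / 4 + -π * I * (4 * k - 1) / 4 : ℂ) = π / 2 * I + k * (-(π * I)) := by ring
    rw [h1, Complex.exp_add, Complex.exp_pi_div_two_mul_I, Complex.exp_nat_mul, Complex.exp_neg,
      Complex.exp_pi_mul_I]
    push_cast
    norm_num
    ring
  rw [this, im_ofReal_mul]
  simp

lemma gaussT_im' (N : ℕ) :
    (gaussT N).im = ∑ r ∈ Finset.range N, (-1 : ℝ) ^ r * Real.sin (π * (r : ℝ) ^ 2 / N) := by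
  unfold gaussT
  rw [Complex.im_sum]
  refine Finset.sum_congr rfl (fun r _ => ?_)
  have h1 : Complex.exp (Complex.I * π * r) = (((-1 : ℝ) ^ r : ℝ) : ℂ) := by
    rw [show Complex.I * π * r = r * (π * Complex.I) by ring, Complex.exp_nat_mul,
      Complex.exp_pi_mul_I]
    push_cast; rfl
  have h2 : Complex.I * π * (r : ℂ) ^ 2 / N = ((π * (r : ℝ) ^ 2 / N : ℝ) : ℂ) * Complex.I := by
    push_cast; ring
  rw [Complex.exp_add, h1, h2, Complex.im_ofReal_mul, Complex.exp_ofReal_mul_I_im]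

theorem extended_alternating_sine_sum_4k_sub_one (k p : ℕ) (hk : 0 < k) (hp : 0 < p) :
    ∑ n ∈ Finset.Icc 1 (p * (4 * k - 1)), (-1 : ℝ) ^ n *
        Real.sin (π * (n : ℝ) ^ 2 / (4 * (k : ℝ) - 1)) =
      (-1 : ℝ) ^ k * (p : ℝ) * Real.sqrt (4 * (k : ℝ) - 1) := by
  obtain ⟨N, hN⟩ : ∃ N, N = 4 * k - 1 := ⟨_, rfl⟩
  have hN1 : N + 1 = 4 * k := by omega
  have hN0 : 0 < N := by omega
  have hNr : 4 * (k : ℝ) - 1 = N := by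
    rw [sub_eq_iff_eq_add]; exact_mod_cast hN1.symm
  have hNne : (N : ℝ) ≠ 0 := by exact_mod_cast hN0.ne'
  rw [← hN, hNr]
  have hodd : Odd N := ⟨2 * k - 1, by omega⟩
  set f : ℕ → ℝ := fun n => (-1 : ℝ) ^ n * Real.sin (π * (n : ℝ) ^ 2 / N) with hf
  have hper : ∀ n, f (n + N) = f n := by
    intro n
    simp only [hf]
    have : π * ((n + N : ℕ) : ℝ) ^ 2 / N = π * (n : ℝ) ^ 2 / N + ((2 * n + N : ℕ) : ℝ) * π := by
      push_cast; field_simp; ring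
    rw [this, Real.sin_add_nat_mul_pi, pow_add, pow_add, pow_mul, hodd.neg_one_pow]
    norm_num
  have hper' : ∀ q n, f (q * N + n) = f n := by
    intro q
    induction q with
    | zero => intro n; simp
    | succ q ih =>
      intro n
      rw [← ih n, ← hper (q * N + n)]
      congr 1; ring
  have hsum : ∀ q, ∑ n ∈ Finset.range (q * N), f n = q * ∑ n ∈ Finset.range N, f n := by
    intro q
    induction q with
    | zero => simp
    | succ q ih =>
      rw [Nat.succ_mul, Finset.sum_range_add, ih]
      simp_rw [hper']
      push_cast; ring
  have hIcc : ∀ M, ∑ n ∈ Finset.Icc 1 M, f n + f 0 = ∑ n ∈ Finset.range M, f n + f M := by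
    intro M
    induction M with
    | zero => simp
    | succ M ih =>
      rw [Finset.sum_Icc_succ_top (by omega), Finset.sum_range_succ]
      linarith
  have h1 := hIcc (p * N)
  have h2 : f (p * N) = f 0 := hper' p 0
  rw [h2, hsum, ← gaussT_im', gaussT_im k N hN1 hN0] at h1
  have h3 := add_right_cancel h1
  rw [h3]; ring
end
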